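/- arXiv:2301.03735 — 9 statements merged into one kernel-verified Lean document; each statement's English description precedes it below -/
import Mathlib

section
/- If T and U are weak multipliers of A, then the pointwise sum T + U, the scalar multiple k • T (for any k ∈ K), and the Jordan product T ∘ U + U ∘ T (the pointwise sum of the two composites) are weak multipliers of A. -/
/-- A function `T : A → A` is a weak multiplier of `A` if
`x * T y = T x * y` for all `x, y`. -/
def IsWeakMultiplier {A : Type*} [Mul A] (T : A → A) : Prop :=
  ∀ x y : A, x * T y = T x * y

theorem sum_smul_jordan_weakMultiplier
    {K A : Type*} [Field K] [NonUnitalNonAssocRing A] [Module K A]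
    [SMulCommClass K A A] [IsScalarTower K A A]
    (T U : A → A) (hT : IsWeakMultiplier T) (hU : IsWeakMultiplier U) (k : K) :
    IsWeakMultiplier (fun x => T x + U x) ∧
    IsWeakMultiplier (fun x => k • T x) ∧
    IsWeakMultiplier (fun x => T (U x) + U (T x)) := by
  refine ⟨fun x y => ?_, fun x y => ?_, fun x y => ?_⟩
  · simp only [mul_add, add_mul, hT x y, hU x y]
  · simp only [mul_smul_comm, smul_mul_assoc, hT x y]
  · simp only [mul_add, add_mul]
    rw [hT x (U y), hU (T x) y, hU x (T y), hT (U x) y, add_comm]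
end

section
/- If T is a weak multiplier of A such that the linear span of the image T(A) intersects A₀ only in {0}, then T is a K-linear map, i.e., T(a•x + b•y) = a•T(x) + b•T(y) for all a, b ∈ K and x, y ∈ A. -/
theorem weakMultiplier_linear_of_span_inter_ann_eq_bot
    {K A : Type*} [Field K] [NonUnitalNonAssocRing A] [Module K A]
    [SMulCommClass K A A] [IsScalarTower K A A]
    (T : A → A) (hT : IsWeakMultiplier T)
    (h : (Submodule.span K (Set.range T) : Set A) ∩
          {a : A | (∀ x : A, a * x = 0) ∧ (∀ x : A, x * a = 0)} ⊆ {0}) :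
    ∀ (a b : K) (x y : A), T (a • x + b • y) = a • T x + b • T y := by
  intro a b x y
  have mem (z : A) : T z ∈ Submodule.span K (Set.range T) := Submodule.subset_span ⟨z, rfl⟩
  refine sub_eq_zero.mp (h ⟨?_, fun z => ?_, fun z => ?_⟩)
  · exact sub_mem (mem _) (add_mem (Submodule.smul_mem _ a (mem x)) (Submodule.smul_mem _ b (mem y)))
  · simp only [sub_mul, add_mul, smul_mul_assoc, ← hT _ z, sub_self]
  · simp only [mul_sub, mul_add, mul_smul_comm, hT z, sub_self]
end

section
/- If A₀ = {0}, then every weak multiplier of A is a K-linear map. -/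
theorem weakMultiplier_linear_of_ann_eq_bot
    {K A : Type*} [Field K] [NonUnitalNonAssocRing A] [Module K A]
    [SMulCommClass K A A] [IsScalarTower K A A]
    (h : {a : A | (∀ x : A, a * x = 0) ∧ (∀ x : A, x * a = 0)} = {0})
    (T : A → A) (hT : IsWeakMultiplier T) :
    ∀ (a b : K) (x y : A), T (a • x + b • y) = a • T x + b • T y := by
  intro a b x y
  have hmem : T (a • x + b • y) - (a • T x + b • T y) ∈
      {a : A | (∀ x : A, a * x = 0) ∧ (∀ x : A, x * a = 0)} := by
    refine ⟨fun z => ?_, fun z => ?_⟩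
    · rw [sub_mul, ← hT, add_mul, add_mul, smul_mul_assoc, smul_mul_assoc, smul_mul_assoc,
        smul_mul_assoc, hT x z, hT y z, sub_self]
    · rw [mul_sub, hT, mul_add, mul_add, mul_smul_comm, mul_smul_comm, mul_smul_comm,
        mul_smul_comm, hT z x, hT z y, sub_self]
  rw [h] at hmem
  exact sub_eq_zero.mp hmem
end

section
/- Given a nihil decomposition A = A₁ ⊕ A₀ and a function T : A → A written as T = T₁ + T₀ with T₁(A) ⊆ A₁ and T₀(A) ⊆ A₀: T is a weak multiplier of A if and only if T₁ is a weak multiplier of A; moreover, if T is a weak multiplier, then T₁ is a K-linear map and T₁ vanishes on A₀. -/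
theorem nihil_decomposition_weakMultiplier
    {K A : Type*} [Field K] [NonUnitalNonAssocRing A] [Module K A]
    [SMulCommClass K A A] [IsScalarTower K A A]
    (A₁ A₀ : Submodule K A)
    (hA₀ : (A₀ : Set A) = {a : A | (∀ x : A, a * x = 0) ∧ (∀ x : A, x * a = 0)})
    (hcompl : IsCompl A₁ A₀)
    (T T₁ T₀ : A → A)
    (hsum : ∀ x : A, T x = T₁ x + T₀ x)
    (h₁ : ∀ x : A, T₁ x ∈ A₁) (h₀ : ∀ x : A, T₀ x ∈ A₀) :
    (IsWeakMultiplier T ↔ IsWeakMultiplier T₁) ∧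
    (IsWeakMultiplier T →
      (∀ (a b : K) (x y : A), T₁ (a • x + b • y) = a • T₁ x + b • T₁ y) ∧
      (∀ x ∈ A₀, T₁ x = 0)) := by
  have mem_A₀ (a : A) : a ∈ A₀ ↔ (∀ x : A, a * x = 0) ∧ (∀ x : A, x * a = 0) := by
    rw [← SetLike.mem_coe, hA₀, Set.mem_ofPred_eq]
  have iff_T₁ : IsWeakMultiplier T ↔ IsWeakMultiplier T₁ := by
    refine forall₂_congr fun x y => ?_
    rw [hsum, hsum, mul_add, add_mul, ((mem_A₀ _).1 (h₀ y)).2, ((mem_A₀ _).1 (h₀ x)).1,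
      add_zero, add_zero]
  have eq_zero (d : A) (hd₁ : d ∈ A₁) (hd₀ : d ∈ A₀) : d = 0 :=
    Submodule.disjoint_def.1 hcompl.disjoint d hd₁ hd₀
  refine ⟨iff_T₁, fun hT => ?_⟩
  have hT₁ : ∀ x y : A, x * T₁ y = T₁ x * y := iff_T₁.1 hT
  refine ⟨fun a b x y => ?_, fun x hx => ?_⟩
  · refine sub_eq_zero.1 (eq_zero _ ?_ ((mem_A₀ _).2 ⟨fun z => ?_, fun z => ?_⟩))
    · exact A₁.sub_mem (h₁ _) (A₁.add_mem (A₁.smul_mem a (h₁ x)) (A₁.smul_mem b (h₁ y)))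
    · rw [sub_mul, ← hT₁]
      simp only [add_mul, smul_mul_assoc, ← hT₁, sub_self]
    · rw [mul_sub, hT₁]
      simp only [mul_add, mul_smul_comm, hT₁, sub_self]
  · refine eq_zero _ (h₁ x) ((mem_A₀ _).2 ⟨fun z => ?_, fun z => ?_⟩)
    · rw [← hT₁, ((mem_A₀ x).1 hx).1]
    · rw [hT₁, ((mem_A₀ x).1 hx).2]
end

section
/- Given a nihil decomposition A = A₁ ⊕ A₀ in which A₁ is a subalgebra of A (closed under multiplication), and a function T : A → A written as T = T₁ + T₀ with T₁(A) ⊆ A₁ and T₀(A) ⊆ A₀: if T is a multiplier of A, then T₁ is a multiplier of A and T₀(x·y) = 0 for all x, y ∈ A. -/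
/-- A function `T : A → A` is a multiplier of `A` if
`x * T y = T (x * y) = T x * y` for all `x, y`. -/
def IsMultiplier {A : Type*} [Mul A] (T : A → A) : Prop :=
  ∀ x y : A, x * T y = T (x * y) ∧ T (x * y) = T x * y

theorem nihil_decomposition_multiplier_converse
    {K A : Type*} [Field K] [NonUnitalNonAssocRing A] [Module K A]
    [SMulCommClass K A A] [IsScalarTower K A A]
    (A₁ A₀ : Submodule K A)
    (hA₀ : (A₀ : Set A) = {a : A | (∀ x : A, a * x = 0) ∧ (∀ x : A, x * a = 0)})
    (hcompl : IsCompl A₁ A₀)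
    (hmul : ∀ x ∈ A₁, ∀ y ∈ A₁, x * y ∈ A₁)
    (T T₁ T₀ : A → A)
    (hsum : ∀ x : A, T x = T₁ x + T₀ x)
    (h₁ : ∀ x : A, T₁ x ∈ A₁) (h₀ : ∀ x : A, T₀ x ∈ A₀)
    (hT : IsMultiplier T) :
    IsMultiplier T₁ ∧ (∀ x y : A, T₀ (x * y) = 0) := by
  have hl : ∀ a ∈ A₀, ∀ x : A, a * x = 0 := fun a ha => by
    rw [← SetLike.mem_coe, hA₀] at ha
    exact ha.1
  have hr : ∀ a ∈ A₀, ∀ x : A, x * a = 0 := fun a ha => by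
    rw [← SetLike.mem_coe, hA₀] at ha
    exact ha.2
  have hxT : ∀ x y : A, x * T y = x * T₁ y := fun x y => by
    rw [hsum, mul_add, hr _ (h₀ y), add_zero]
  have hTx : ∀ x y : A, T x * y = T₁ x * y := fun x y => by
    rw [hsum, add_mul, hl _ (h₀ x), add_zero]
  have hT_mem : ∀ x y : A, T (x * y) ∈ A₁ := fun x y => by
    obtain ⟨u, hu, v, hv, rfl⟩ := Submodule.mem_sup.mp
      (hcompl.sup_eq_top ▸ Submodule.mem_top : x ∈ A₁ ⊔ A₀)
    rw [← (hT _ y).1, hxT, add_mul, hl v hv, add_zero]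
    exact hmul u hu _ (h₁ y)
  have hT₀ : ∀ x y : A, T₀ (x * y) = 0 := fun x y => by
    refine Submodule.disjoint_def.mp hcompl.disjoint _ ?_ (h₀ _)
    rw [eq_sub_of_add_eq' (hsum (x * y)).symm]
    exact A₁.sub_mem (hT_mem x y) (h₁ _)
  refine ⟨fun x y => ?_, hT₀⟩
  have hT₁ : T (x * y) = T₁ (x * y) := by rw [hsum, hT₀, add_zero]
  rw [← hT₁, ← hxT, ← hTx]
  exact hT x y
end

section
/- Suppose A = A₁ ⊕ A₀ is a nihil decomposition in which A₁ is a subalgebra of A (closed under multiplication), let π : A → A₁ be the projection onto A₁ along A₀, and for S : A₁ → A₁ let Φ(S) : A → A be the map x ↦ S(π(x)) (viewed in A). Then S is a weak multiplier of the algebra A₁ if and only if Φ(S) is a weak multiplier of A, and S is a multiplier of A₁ if and only if Φ(S) is a multiplier of A; moreover Φ(S ∘ S') = Φ(S) ∘ Φ(S') for all S, S' : A₁ → A₁. -/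
/-- `S` (regarded as a map `A₁ → A₁`) is a weak multiplier of the
subalgebra `A₁` with the induced multiplication. -/
def IsWeakMultiplierOn {A : Type*} [Mul A] (A₁ : Set A) (S : A → A) : Prop :=
  ∀ x ∈ A₁, ∀ y ∈ A₁, x * S y = S x * y

/-- `S` (regarded as a map `A₁ → A₁`) is a multiplier of the
subalgebra `A₁` with the induced multiplication. -/
def IsMultiplierOn {A : Type*} [Mul A] (A₁ : Set A) (S : A → A) : Prop :=
  ∀ x ∈ A₁, ∀ y ∈ A₁, x * S y = S (x * y) ∧ S (x * y) = S x * y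

theorem nihil_decomposition_Phi_multiplier
    {K A : Type*} [Field K] [NonUnitalNonAssocRing A] [Module K A]
    [SMulCommClass K A A] [IsScalarTower K A A]
    (A₁ A₀ : Submodule K A)
    (hA₀ : (A₀ : Set A) = {a : A | (∀ x : A, a * x = 0) ∧ (∀ x : A, x * a = 0)})
    (hcompl : IsCompl A₁ A₀)
    (hmul : ∀ x ∈ A₁, ∀ y ∈ A₁, x * y ∈ A₁)
    (π : A → A) (hπ₁ : ∀ x : A, π x ∈ A₁) (hπ₀ : ∀ x : A, x - π x ∈ A₀)
    (S S' : A → A) (hS : ∀ x ∈ A₁, S x ∈ A₁) (hS' : ∀ x ∈ A₁, S' x ∈ A₁) :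
    (IsWeakMultiplierOn (A₁ : Set A) S ↔ IsWeakMultiplier (fun x : A => S (π x))) ∧
    (IsMultiplierOn (A₁ : Set A) S ↔ IsMultiplier (fun x : A => S (π x))) ∧
    (∀ x : A, S (S' (π x)) = S (π (S' (π x)))) := by
  have hA₀' : ∀ a ∈ A₀, (∀ x : A, a * x = 0) ∧ (∀ x : A, x * a = 0) := fun a ha => by
    have ha' : a ∈ (A₀ : Set A) := ha
    rwa [hA₀] at ha'
  have hπ_id : ∀ x ∈ A₁, π x = x := fun x hx =>
    (sub_eq_zero.mp (Submodule.disjoint_def.mp hcompl.disjoint _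
      (A₁.sub_mem hx (hπ₁ x)) (hπ₀ x))).symm
  have hπ_left : ∀ x y : A, π x * y = x * y := fun x y =>
    (sub_eq_zero.mp (by rw [← sub_mul]; exact (hA₀' _ (hπ₀ x)).1 y)).symm
  have hπ_right : ∀ x y : A, x * π y = x * y := fun x y =>
    (sub_eq_zero.mp (by rw [← mul_sub]; exact (hA₀' _ (hπ₀ y)).2 x)).symm
  have hπ_mul : ∀ x y : A, π (x * y) = π x * π y := fun x y => by
    rw [← hπ_id _ (hmul _ (hπ₁ x) _ (hπ₁ y)), hπ_left, hπ_right]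
  refine ⟨⟨fun h x y => ?_, fun h x hx y hy => ?_⟩,
    ⟨fun h x y => ?_, fun h x hx y hy => ?_⟩, fun x => ?_⟩
  · have := h _ (hπ₁ x) _ (hπ₁ y)
    rwa [hπ_left, hπ_right] at this
  · simpa only [hπ_id x hx, hπ_id y hy] using h x y
  · have := h _ (hπ₁ x) _ (hπ₁ y)
    rwa [← hπ_mul, hπ_left, hπ_right] at this
  · simpa only [hπ_id x hx, hπ_id y hy, hπ_id _ (hmul x hx y hy)] using h x y
  · rw [hπ_id _ (hS' _ (hπ₁ x))]
end

section
/- Given a nihil decomposition A = A₁ ⊕ A₀, suppose a weak multiplier T of A is written as T = T₁ + R, where T₁ is a K-linear weak multiplier of A with T₁(A) ⊆ A₁ and T₁(A₀) = {0}, and R : A → A satisfies R(A) ⊆ A₀. Then T is a multiplier of A if and only if R(x₁·y₁) = x₁·T₁(y₁) − T₁(x₁·y₁) for all x₁, y₁ ∈ A₁. -/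
theorem weakMultiplier_isMultiplier_iff
    {K A : Type*} [Field K] [NonUnitalNonAssocRing A] [Module K A]
    [SMulCommClass K A A] [IsScalarTower K A A]
    (A₁ A₀ : Submodule K A)
    (hA₀ : (A₀ : Set A) = {a : A | (∀ x : A, a * x = 0) ∧ (∀ x : A, x * a = 0)})
    (hcompl : IsCompl A₁ A₀)
    (T T₁ R : A → A)
    (hT : IsWeakMultiplier T)
    (hsum : ∀ x : A, T x = T₁ x + R x)
    (hT₁w : IsWeakMultiplier T₁)
    (hT₁lin : ∀ (a b : K) (x y : A), T₁ (a • x + b • y) = a • T₁ x + b • T₁ y)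
    (hT₁ran : ∀ x : A, T₁ x ∈ A₁) (hT₁ann : ∀ x ∈ A₀, T₁ x = 0)
    (hR : ∀ x : A, R x ∈ A₀) :
    IsMultiplier T ↔
      ∀ x₁ ∈ A₁, ∀ y₁ ∈ A₁, R (x₁ * y₁) = x₁ * T₁ y₁ - T₁ (x₁ * y₁) := by
  have left_zero : ∀ a ∈ A₀, ∀ x, a * x = 0 := fun a ha =>
    (hA₀.subset (SetLike.mem_coe.mpr ha)).1
  have right_zero : ∀ a ∈ A₀, ∀ x, x * a = 0 := fun a ha =>
    (hA₀.subset (SetLike.mem_coe.mpr ha)).2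
  have mul_T : ∀ x y, x * T y = x * T₁ y := fun x y => by
    rw [hsum, mul_add, right_zero _ (hR y), add_zero]
  constructor
  · intro h x _ y _
    rw [← mul_T, (h x y).1, hsum, add_sub_cancel_left]
  · intro h
    have key : ∀ x y, x * T y = T (x * y) := fun x y => by
      obtain ⟨x₁, hx₁, x₀, hx₀, rfl⟩ :=
        Submodule.mem_sup.mp (hcompl.sup_eq_top ▸ Submodule.mem_top : x ∈ A₁ ⊔ A₀)
      obtain ⟨y₁, hy₁, y₀, hy₀, rfl⟩ :=
        Submodule.mem_sup.mp (hcompl.sup_eq_top ▸ Submodule.mem_top : y ∈ A₁ ⊔ A₀)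
      have T₁_add : T₁ (y₁ + y₀) = T₁ y₁ := by
        simpa [hT₁ann y₀ hy₀] using hT₁lin 1 1 y₁ y₀
      rw [mul_T, T₁_add, add_mul, left_zero x₀ hx₀, add_mul, left_zero x₀ hx₀, mul_add,
        right_zero y₀ hy₀, add_zero, add_zero, add_zero, hsum, h x₁ hx₁ y₁ hy₁,
        add_sub_cancel]
    exact fun x y => ⟨key x y, (key x y).symm.trans (hT x y)⟩
end

section
/- Let A be an associative algebra over K with A₀ = {0}. Then every weak multiplier of A is a multiplier of A, and every weak multiplier of A is a K-linear map. -/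
/-- If only zero annihilates `A` on both sides, elements are determined by their left and right
products. -/
theorem eq_of_forall_mul_eq {A : Type*} [NonUnitalRing A]
    (h : {a : A | (∀ x : A, a * x = 0) ∧ (∀ x : A, x * a = 0)} = {0}) {a b : A}
    (hl : ∀ z, a * z = b * z) (hr : ∀ z, z * a = z * b) : a = b := by
  have hab : a - b ∈ {a : A | (∀ x : A, a * x = 0) ∧ (∀ x : A, x * a = 0)} :=
    ⟨fun z => by rw [sub_mul, hl, sub_self], fun z => by rw [mul_sub, hr, sub_self]⟩
  rw [h] at hab
  exact sub_eq_zero.mp hab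

theorem assoc_weakMultiplier_eq_multiplier_of_ann_eq_bot
    {K A : Type*} [Field K] [NonUnitalRing A] [Module K A]
    [SMulCommClass K A A] [IsScalarTower K A A]
    (h : {a : A | (∀ x : A, a * x = 0) ∧ (∀ x : A, x * a = 0)} = {0})
    (T : A → A) (hT : IsWeakMultiplier T) :
    IsMultiplier T ∧
    (∀ (a b : K) (x y : A), T (a • x + b • y) = a • T x + b • T y) := by
  have hmul (x y : A) : T (x * y) = T x * y := by
    refine eq_of_forall_mul_eq h (fun z => ?_) (fun z => ?_)
    · rw [← hT, mul_assoc, hT y z, ← mul_assoc, hT x y]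
    · rw [hT, ← mul_assoc, ← hT z x, mul_assoc]
  refine ⟨fun x y => ⟨(hT x y).trans (hmul x y).symm, hmul x y⟩, fun a b x y => ?_⟩
  refine eq_of_forall_mul_eq h (fun z => ?_) (fun z => ?_)
  · rw [← hT, add_mul, add_mul, smul_mul_assoc, smul_mul_assoc, smul_mul_assoc, smul_mul_assoc,
      hT x z, hT y z]
  · rw [hT, mul_add, mul_add, mul_smul_comm, mul_smul_comm, mul_smul_comm, mul_smul_comm,
      hT z x, hT z y]
end

section
/- Let A be an associative algebra over K with a left identity e (e·x = x for all x ∈ A). Then every weak multiplier T of A equals the left multiplication l_{T(e)} by the element a = T(e), this element a is left central, and T is a K-linear multiplier of A. Moreover, for left central elements a, b ∈ A, one has l_a = l_b if and only if a − b ∈ Ann_l(A). -/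
theorem weakMultiplier_eq_mulLeft_of_left_identity
    {K A : Type*} [Field K] [NonUnitalRing A] [Module K A]
    [SMulCommClass K A A] [IsScalarTower K A A]
    (e : A) (he : ∀ x : A, e * x = x) :
    (∀ T : A → A, IsWeakMultiplier T →
      (∀ x : A, T x = T e * x) ∧
      (∀ x y : A, x * T e * y = T e * x * y) ∧
      IsMultiplier T ∧
      (∀ (a b : K) (x y : A), T (a • x + b • y) = a • T x + b • T y)) ∧
    (∀ a b : A, (∀ x y : A, x * a * y = a * x * y) →
      (∀ x y : A, x * b * y = b * x * y) →
      ((∀ x : A, a * x = b * x) ↔ ∀ x : A, (a - b) * x = 0)) := by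
  refine ⟨fun T hT => ?_, fun a b _ _ => by simp only [sub_mul, sub_eq_zero]⟩
  have hl : ∀ x : A, T x = T e * x := fun x => by rw [← hT e x, he]
  have hm : ∀ x y : A, T (x * y) = T x * y := fun x y => by
    rw [hl (x * y), hl x, mul_assoc]
  refine ⟨hl, fun x y => ?_, fun x y => ⟨(hT x y).trans (hm x y).symm, hm x y⟩,
    fun a b x y => ?_⟩
  · rw [mul_assoc, ← hl y, hT x y, hl x]
  · rw [hl (a • x + b • y), hl x, hl y, mul_add, mul_smul_comm, mul_smul_comm]
end
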